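/- For every integer n ≥ 0, the formulas defining E_n give a well-defined U-module structure on the (2n+1)-dimensional ℂ-vector space with basis v₀,…,v_n, w₀,…,w_{n−1} (i.e., the three operators defined by the formulas satisfy the relations XZ + ZX = 2X, YZ + ZY = −2Y and X² − Y² = Z), and the resulting U-module E_n is simple. -/

import Mathlib

/-! The even module `E_n` of the twisted enveloping algebra
`U = ℂ⟨X,Y,Z⟩/(XZ+ZX−2X, YZ+ZY+2Y, X²−Y²−Z)` has basis `v₀,…,v_n, w₀,…,w_{n−1}`,
encoded as `Fin (2n+1)` with `v_k ↦ k` and `w_k ↦ n+1+k`. -/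

/-- The matrix of `X` on the even module `E_n`: `X·v_k = w_k` (with `w_n = 0`) and
`X·w_k = (2n + k(4n−2−4k))·v_k`. -/
noncomputable def EmatX (n : ℕ) : Matrix (Fin (2 * n + 1)) (Fin (2 * n + 1)) ℂ :=
  fun r c =>
    if (c : ℕ) ≤ n ∧ (r : ℕ) = n + 1 + (c : ℕ) then 1
    else if n + 1 ≤ (c : ℕ) ∧ (c : ℕ) = (r : ℕ) + (n + 1) then
      2 * (n : ℂ) + (((c : ℕ) : ℂ) - n - 1) * (4 * n - 2 - 4 * (((c : ℕ) : ℂ) - n - 1))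
    else 0

/-- The matrix of `Y` on the even module `E_n`: `Y·v_k = k(4n+2−4k)·w_{k−1}`
(with `w_{−1} = 0`) and `Y·w_k = v_{k+1}`. -/
noncomputable def EmatY (n : ℕ) : Matrix (Fin (2 * n + 1)) (Fin (2 * n + 1)) ℂ :=
  fun r c =>
    if 1 ≤ (c : ℕ) ∧ (c : ℕ) ≤ n ∧ (r : ℕ) = n + (c : ℕ) then
      ((c : ℕ) : ℂ) * (4 * n + 2 - 4 * ((c : ℕ) : ℂ))
    else if n + 1 ≤ (c : ℕ) ∧ (r : ℕ) + n = (c : ℕ) then 1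
    else 0

/-- The matrix of `Z` on the even module `E_n`: `Z·v_k = (2n−4k)·v_k` and
`Z·w_k = (4k+2−2n)·w_k`. -/
noncomputable def EmatZ (n : ℕ) : Matrix (Fin (2 * n + 1)) (Fin (2 * n + 1)) ℂ :=
  fun r c =>
    if r = c then
      (if (r : ℕ) ≤ n then 2 * (n : ℂ) - 4 * ((r : ℕ) : ℂ)
        else 4 * ((r : ℕ) : ℂ) - 6 * (n : ℂ) - 2)
    else 0

/-! Interleaving the two families as `e₀ = v₀, e₁ = w₀, e₂ = v₁, …, e₂ₙ = vₙ` turns `E_n` into a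
twist by parity of the `(2n+1)`-dimensional irreducible representation of `sl₂`: `X` raises the
even vectors and lowers the odd ones, `Y` does the opposite, and `Z·e_j = (−1)ʲ(2n−2j)·e_j`.
Lowering sends `e_{j+1}` to `(j+1)(2n−j)·e_j`, because `2n + k(4n−2−4k) = (2k+1)(2n−2k)` and
`k(4n+2−4k) = 2k(2n−(2k−1))`. The scalars `(−1)ʲ(2n−2j)` are pairwise distinct, so a nonzero
invariant subspace contains some `e_j`. Since `(i+1)(2n−i) ≠ 0` for `i < 2n`, one can descend from
`e_j` to `e₀`, and from `e₀` climb to every `e_i`. -/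

open Module Module.End Polynomial

section Eigenvectors

variable {K V ι : Type*} [Field K] [AddCommGroup V] [Module K V]

theorem mem_of_sum_mem_invtSubmodule {f : End K V} {W : Submodule K V} (hW : W ∈ f.invtSubmodule)
    {s : Finset ι} {c : ι → K} (hc : Set.InjOn c s) {x : ι → V}
    (hx : ∀ i ∈ s, f (x i) = c i • x i) (hsum : ∑ i ∈ s, x i ∈ W) {i : ι} (hi : i ∈ s) :
    x i ∈ W := by
  classical
  have hproj : aeval f (Lagrange.basis s c i) (∑ j ∈ s, x j) = x i := by
    rw [map_sum, Finset.sum_eq_single_of_mem i hi]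
    · rw [aeval_apply_of_mem_apply_eq_smul (hx i hi), Lagrange.eval_basis_self hc hi, one_smul]
    · intro j hj hji
      rw [aeval_apply_of_mem_apply_eq_smul (hx j hj), Lagrange.eval_basis_of_ne hji.symm hj,
        zero_smul]
  exact hproj ▸ aeval_apply_smul_mem_of_le_comap hsum _ f hW

theorem exists_mem_ne_zero_of_span_eigenvectors {f : End K V} {W : Submodule K V}
    (hW : W ∈ f.invtSubmodule) (hne : W ≠ ⊥) {c : ι → K} (hc : Function.Injective c) {e : ι → V}
    (he : ∀ i, f (e i) = c i • e i) (hspan : Submodule.span K (Set.range e) = ⊤) :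
    ∃ i, e i ∈ W ∧ e i ≠ 0 := by
  obtain ⟨x, hxW, hx0⟩ := W.ne_bot_iff.1 hne
  obtain ⟨a, rfl⟩ := Finsupp.mem_span_range_iff_exists_finsupp.1
    (hspan ▸ Submodule.mem_top : x ∈ Submodule.span K (Set.range e))
  obtain ⟨i, hi, hei⟩ := Finset.exists_ne_zero_of_sum_ne_zero hx0
  have hmem : a i • e i ∈ W := mem_of_sum_mem_invtSubmodule hW (x := fun j => a j • e j) hc.injOn
    (fun j _ => by rw [map_smul, he, smul_comm]) hxW hi
  exact ⟨i, (W.smul_mem_iff (left_ne_zero_of_smul hei)).1 hmem, right_ne_zero_of_smul hei⟩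

theorem injective_neg_one_pow_mul_sub_two_mul [CharZero K] {μ : K}
    (hμ : ∀ m : ℕ, μ = m → Even m) :
    Function.Injective fun j : ℕ => (-1) ^ j * (μ - 2 * j) := by
  -- For `i` and `j` of opposite parities, equality of the two scalars would force `μ = i + j`.
  have hodd : ∀ i j : ℕ, Odd (i + j) → μ - 2 * i ≠ -(μ - 2 * j) := fun i j hij h =>
    Nat.not_even_iff_odd.2 hij (hμ (i + j) (by push_cast; linear_combination h / 2))
  intro i j h
  rcases i.even_or_odd with hi | hi <;> rcases j.even_or_odd with hj | hj <;>
    simp only [hi.neg_one_pow, hj.neg_one_pow, one_mul, neg_one_mul] at h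
  · exact_mod_cast (by linear_combination -h / 2 : (i : K) = j)
  · exact absurd h (hodd i j (hi.add_odd hj))
  · exact absurd h.symm (hodd j i (hj.add_odd hi))
  · exact_mod_cast (by linear_combination h / 2 : (i : K) = j)

end Eigenvectors

theorem linearMap_ext_of_even_of_odd {R M N : Type*} [Semiring R] [AddCommMonoid M] [Module R M]
    [AddCommMonoid N] [Module R N] {e : ℕ → M} (hspan : Submodule.span R (Set.range e) = ⊤)
    {f g : M →ₗ[R] N} (heven : ∀ k, f (e (2 * k)) = g (e (2 * k)))
    (hodd : ∀ k, f (e (2 * k + 1)) = g (e (2 * k + 1))) : f = g := by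
  refine LinearMap.ext_on_range hspan fun j => ?_
  obtain ⟨k, rfl | rfl⟩ := j.even_or_odd'
  exacts [heven k, hodd k]

/-- A sequence `e₀, e₁, …` on which `X`, `Y`, `Z` act as the parity twist of an `sl₂`-module with
highest weight vector `e₀` of weight `μ`: if `F e_j = e_{j+1}`, `E e_{j+1} = (j+1)(μ−j) e_j`,
`E e₀ = 0` and `H e_j = (μ−2j) e_j`, then `X` is `F` on even and `E` on odd vectors, `Y` is `E` on
even and `F` on odd vectors, and `Z e_j = (−1)ʲ H e_j`. In the notation of `E_n`, `e_{2k} = v_k`,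
`e_{2k+1} = w_k` and `μ = 2n`. -/
structure IsTwistedLadder {R V : Type*} [CommRing R] [AddCommGroup V] [Module R V]
    (X Y Z : End R V) (μ : R) (e : ℕ → V) : Prop where
  X_even (k : ℕ) : X (e (2 * k)) = e (2 * k + 1)
  X_odd (k : ℕ) : X (e (2 * k + 1)) = ((2 * k + 1) * (μ - 2 * k)) • e (2 * k)
  Y_zero : Y (e 0) = 0
  Y_even_succ (k : ℕ) :
    Y (e (2 * k + 2)) = ((2 * k + 2) * (μ - (2 * k + 1))) • e (2 * k + 1)
  Y_odd (k : ℕ) : Y (e (2 * k + 1)) = e (2 * k + 2)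
  Z_apply (j : ℕ) : Z (e j) = ((-1) ^ j * (μ - 2 * j)) • e j

namespace IsTwistedLadder

section Relations

variable {R V : Type*} [CommRing R] [AddCommGroup V] [Module R V]
  {X Y Z : End R V} {μ : R} {e : ℕ → V}

theorem Z_even (h : IsTwistedLadder X Y Z μ e) (k : ℕ) :
    Z (e (2 * k)) = (μ - 4 * k) • e (2 * k) := by
  rw [h.Z_apply, (even_two_mul k).neg_one_pow]
  congr 1
  push_cast
  ring

theorem Z_odd (h : IsTwistedLadder X Y Z μ e) (k : ℕ) :
    Z (e (2 * k + 1)) = (4 * k + 2 - μ) • e (2 * k + 1) := by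
  rw [h.Z_apply, (odd_two_mul_add_one k).neg_one_pow]
  congr 1
  push_cast
  ring

theorem Z_even_succ (h : IsTwistedLadder X Y Z μ e) (k : ℕ) :
    Z (e (2 * k + 2)) = (μ - 4 * (k + 1)) • e (2 * k + 2) := by
  exact_mod_cast h.Z_even (k + 1)

theorem Y_Y_even (h : IsTwistedLadder X Y Z μ e) (k : ℕ) :
    Y (Y (e (2 * k))) = (2 * k * (μ - 2 * k + 1)) • e (2 * k) := by
  cases k with
  | zero => simp [h.Y_zero]
  | succ k =>
    rw [Nat.mul_add_one, h.Y_even_succ, map_smul, h.Y_odd]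
    congr 1
    push_cast
    ring

theorem X_mul_Z_add_Z_mul_X (h : IsTwistedLadder X Y Z μ e)
    (hspan : Submodule.span R (Set.range e) = ⊤) : X * Z + Z * X = (2 : R) • X := by
  refine linearMap_ext_of_even_of_odd hspan (fun k => ?_) fun k => ?_ <;>
    simp only [LinearMap.add_apply, Module.End.mul_apply, LinearMap.smul_apply, map_smul,
      h.X_even, h.X_odd, h.Z_even, h.Z_odd] <;>
    module

theorem Y_mul_Z_add_Z_mul_Y (h : IsTwistedLadder X Y Z μ e)
    (hspan : Submodule.span R (Set.range e) = ⊤) : Y * Z + Z * Y = (-2 : R) • Y := by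
  refine linearMap_ext_of_even_of_odd hspan (fun k => ?_) fun k => ?_
  · cases k with
    | zero => simp [h.Y_zero, h.Z_apply]
    | succ k =>
      simp only [LinearMap.add_apply, Module.End.mul_apply, LinearMap.smul_apply, map_smul,
        Nat.mul_add_one, h.Y_even_succ, h.Z_even_succ, h.Z_odd]
      module
  · simp only [LinearMap.add_apply, Module.End.mul_apply, LinearMap.smul_apply, map_smul,
      h.Y_odd, h.Z_odd, h.Z_even_succ]
    module

theorem X_mul_X_sub_Y_mul_Y (h : IsTwistedLadder X Y Z μ e)
    (hspan : Submodule.span R (Set.range e) = ⊤) : X * X - Y * Y = Z := by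
  refine linearMap_ext_of_even_of_odd hspan (fun k => ?_) fun k => ?_
  · simp only [LinearMap.sub_apply, Module.End.mul_apply, h.X_even, h.X_odd, h.Y_Y_even, h.Z_even]
    module
  · simp only [LinearMap.sub_apply, Module.End.mul_apply, map_smul, h.X_odd, h.X_even, h.Y_odd,
      h.Y_even_succ, h.Z_odd]
    module

theorem eq_zero_of_succ_eq_zero (h : IsTwistedLadder X Y Z μ e) {i j : ℕ} (hi : e (i + 1) = 0)
    (hij : i < j) : e j = 0 := by
  induction j, hij using Nat.le_induction with
  | base => exact hi
  | succ j _ ih =>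
    obtain ⟨k, rfl | rfl⟩ := j.even_or_odd'
    · rw [← h.X_even, ih, map_zero]
    · rw [← h.Y_odd, ih, map_zero]

theorem mem_of_zero_mem (h : IsTwistedLadder X Y Z μ e) {W : Submodule R V}
    (hX : W ∈ X.invtSubmodule) (hY : W ∈ Y.invtSubmodule) (h0 : e 0 ∈ W) (j : ℕ) : e j ∈ W := by
  induction j with
  | zero => exact h0
  | succ j ih =>
    obtain ⟨k, rfl | rfl⟩ := j.even_or_odd'
    · exact h.X_even k ▸ hX ih
    · exact h.Y_odd k ▸ hY ih

end Relations

section Invariant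

variable {K V : Type*} [Field K] [CharZero K] [AddCommGroup V] [Module K V]
  {X Y Z : End K V} {μ : K} {e : ℕ → V}

theorem mem_of_succ_mem (h : IsTwistedLadder X Y Z μ e) {W : Submodule K V}
    (hX : W ∈ X.invtSubmodule) (hY : W ∈ Y.invtSubmodule) {j : ℕ} (hj : μ ≠ j)
    (hmem : e (j + 1) ∈ W) : e j ∈ W := by
  have hcoeff : ((j : K) + 1) * (μ - j) ≠ 0 :=
    mul_ne_zero j.cast_add_one_ne_zero (sub_ne_zero.2 hj)
  refine (W.smul_mem_iff hcoeff).1 ?_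
  obtain ⟨k, rfl | rfl⟩ := j.even_or_odd'
  · simpa [h.X_odd] using hX hmem
  · have hlower : Y (e (2 * k + 1 + 1)) =
        (((2 * k + 1 : ℕ) + 1 : K) * (μ - (2 * k + 1 : ℕ))) • e (2 * k + 1) := by
      rw [h.Y_even_succ]
      congr 1
      push_cast
      ring
    exact hlower ▸ hY hmem

theorem zero_mem_of_mem (h : IsTwistedLadder X Y Z μ e) {W : Submodule K V}
    (hX : W ∈ X.invtSubmodule) (hY : W ∈ Y.invtSubmodule) {j : ℕ} (hj : ∀ i < j, μ ≠ i)
    (hmem : e j ∈ W) : e 0 ∈ W := by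
  induction j with
  | zero => exact hmem
  | succ j ih =>
    exact ih (fun i hi => hj i (hi.trans j.lt_succ_self))
      (h.mem_of_succ_mem hX hY (hj j j.lt_succ_self) hmem)

theorem eq_bot_or_eq_top (h : IsTwistedLadder X Y Z μ e)
    (hspan : Submodule.span K (Set.range e) = ⊤) (heven : ∀ m : ℕ, μ = m → Even m)
    (htop : ∀ m : ℕ, μ = m → e (m + 1) = 0) {W : Submodule K V} (hX : W ∈ X.invtSubmodule)
    (hY : W ∈ Y.invtSubmodule) (hZ : W ∈ Z.invtSubmodule) : W = ⊥ ∨ W = ⊤ := by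
  refine or_iff_not_imp_left.2 fun hne => ?_
  obtain ⟨j, hjW, hj0⟩ := exists_mem_ne_zero_of_span_eigenvectors hZ hne
    (injective_neg_one_pow_mul_sub_two_mul heven) h.Z_apply hspan
  have hμ : ∀ i < j, μ ≠ i := fun i hij hi => hj0 (h.eq_zero_of_succ_eq_zero (htop i hi) hij)
  have h0 : e 0 ∈ W := h.zero_mem_of_mem hX hY hμ hjW
  rw [eq_top_iff, ← hspan, Submodule.span_le]
  exact Set.range_subset_iff.2 (h.mem_of_zero_mem hX hY h0)

end Invariant

end IsTwistedLadder

/-- The position of the `r`-th basis vector of `E_n` in the sequence `v₀, w₀, v₁, w₁, …, v_n`. -/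
def ladderPosition (n : ℕ) (r : Fin (2 * n + 1)) : ℕ :=
  if (r : ℕ) ≤ n then 2 * r else 2 * (r - (n + 1)) + 1

/-- The sequence `v₀, w₀, v₁, w₁, …, v_n, 0, 0, …` in `E_n`. Continued by zero, it satisfies the
formulas defining `X` and `Y` at every index. -/
noncomputable def ladderVec (n j : ℕ) : Fin (2 * n + 1) → ℂ :=
  fun r => if ladderPosition n r = j then 1 else 0

theorem ladderPosition_injective (n : ℕ) : Function.Injective (ladderPosition n) := by
  intro r s h
  simp only [ladderPosition] at h
  grind

theorem ladderVec_ladderPosition (n : ℕ) (r : Fin (2 * n + 1)) :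
    ladderVec n (ladderPosition n r) = Pi.single r 1 := by
  ext s
  simp [ladderVec, Pi.single_apply, (ladderPosition_injective n).eq_iff]

theorem ladderVec_eq_zero {n j : ℕ} (hj : 2 * n < j) : ladderVec n j = 0 := by
  ext r
  simp only [ladderVec, ladderPosition, Pi.zero_apply]
  grind

theorem ladderVec_even {n k : ℕ} (hk : k ≤ n) :
    ladderVec n (2 * k) = Pi.single ⟨k, by omega⟩ 1 := by
  simpa [ladderPosition, hk] using ladderVec_ladderPosition n ⟨k, by omega⟩

theorem ladderVec_odd {n k : ℕ} (hk : k < n) :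
    ladderVec n (2 * k + 1) = Pi.single ⟨n + 1 + k, by omega⟩ 1 := by
  rw [← ladderVec_ladderPosition]
  congr 1
  simp only [ladderPosition]
  grind

theorem span_range_ladderVec (n : ℕ) : Submodule.span ℂ (Set.range (ladderVec n)) = ⊤ := by
  rw [eq_top_iff, ← (Pi.basisFun ℂ (Fin (2 * n + 1))).span_eq, Submodule.span_le]
  rintro _ ⟨r, rfl⟩
  rw [Pi.basisFun_apply, ← ladderVec_ladderPosition]
  exact Submodule.subset_span (Set.mem_range_self _)

theorem EmatX_ladderVec_even (n k : ℕ) :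
    Matrix.toLin' (EmatX n) (ladderVec n (2 * k)) = ladderVec n (2 * k + 1) := by
  rcases le_or_gt k n with hk | hk
  · rw [ladderVec_even hk, Matrix.toLin'_apply, Matrix.mulVec_single_one]
    ext r
    simp only [Matrix.col_apply, EmatX, ladderVec, ladderPosition]
    grind
  · rw [ladderVec_eq_zero (by omega), ladderVec_eq_zero (by omega), map_zero]

theorem EmatX_ladderVec_odd (n k : ℕ) :
    Matrix.toLin' (EmatX n) (ladderVec n (2 * k + 1)) =
      ((2 * k + 1) * (2 * n - 2 * k) : ℂ) • ladderVec n (2 * k) := by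
  rcases lt_trichotomy k n with hk | rfl | hk
  · rw [ladderVec_odd hk, Matrix.toLin'_apply, Matrix.mulVec_single_one]
    ext r
    simp only [Matrix.col_apply, EmatX, ladderVec, ladderPosition, Pi.smul_apply, smul_eq_mul]
    push_cast
    grind
  · -- Here `w_n = 0`, while `v_n ≠ 0` has the coefficient `2n - 2n`.
    simp [ladderVec_eq_zero]
  · rw [ladderVec_eq_zero (by omega), ladderVec_eq_zero (by omega), map_zero, smul_zero]

theorem EmatY_ladderVec_zero (n : ℕ) : Matrix.toLin' (EmatY n) (ladderVec n 0) = 0 := by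
  rw [← mul_zero 2, ladderVec_even n.zero_le, Matrix.toLin'_apply, Matrix.mulVec_single_one]
  ext r
  simp [EmatY]

theorem EmatY_ladderVec_even_succ (n k : ℕ) :
    Matrix.toLin' (EmatY n) (ladderVec n (2 * k + 2)) =
      ((2 * k + 2) * (2 * n - (2 * k + 1)) : ℂ) • ladderVec n (2 * k + 1) := by
  rcases lt_or_ge k n with hk | hk
  · rw [← Nat.mul_add_one, ladderVec_even hk, Matrix.toLin'_apply, Matrix.mulVec_single_one]
    ext r
    simp only [Matrix.col_apply, EmatY, ladderVec, ladderPosition, Pi.smul_apply, smul_eq_mul]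
    push_cast
    grind
  · rw [ladderVec_eq_zero (by omega), ladderVec_eq_zero (by omega), map_zero, smul_zero]

theorem EmatY_ladderVec_odd (n k : ℕ) :
    Matrix.toLin' (EmatY n) (ladderVec n (2 * k + 1)) = ladderVec n (2 * k + 2) := by
  rcases lt_or_ge k n with hk | hk
  · rw [ladderVec_odd hk, Matrix.toLin'_apply, Matrix.mulVec_single_one]
    ext r
    simp only [Matrix.col_apply, EmatY, ladderVec, ladderPosition]
    grind
  · rw [ladderVec_eq_zero (by omega), ladderVec_eq_zero (by omega), map_zero]

theorem EmatZ_eq_diagonal (n : ℕ) :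
    EmatZ n = Matrix.diagonal fun r =>
      (-1) ^ ladderPosition n r * (2 * n - 2 * ladderPosition n r : ℂ) := by
  ext r s
  rw [EmatZ, Matrix.diagonal_apply]
  refine if_congr Iff.rfl ?_ rfl
  unfold ladderPosition
  split_ifs with hr
  · rw [(even_two_mul _).neg_one_pow]
    push_cast
    ring
  · rw [(odd_two_mul_add_one _).neg_one_pow]
    push_cast [Nat.cast_sub (not_le.1 hr)]
    ring

theorem EmatZ_ladderVec (n j : ℕ) :
    Matrix.toLin' (EmatZ n) (ladderVec n j) =
      ((-1) ^ j * (2 * n - 2 * j) : ℂ) • ladderVec n j := by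
  ext r
  rw [EmatZ_eq_diagonal, Matrix.toLin'_apply, Matrix.mulVec_diagonal, Pi.smul_apply, smul_eq_mul,
    ladderVec]
  split_ifs with hr
  · rw [hr]
  · simp only [mul_zero]

theorem isTwistedLadder_ladderVec (n : ℕ) :
    IsTwistedLadder (Matrix.toLin' (EmatX n)) (Matrix.toLin' (EmatY n)) (Matrix.toLin' (EmatZ n))
      (2 * n : ℂ) (ladderVec n) where
  X_even := EmatX_ladderVec_even n
  X_odd := EmatX_ladderVec_odd n
  Y_zero := EmatY_ladderVec_zero n
  Y_even_succ := EmatY_ladderVec_even_succ n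
  Y_odd := EmatY_ladderVec_odd n
  Z_apply := EmatZ_ladderVec n

/-- for every `n ≥ 0` the formulas defining `E_n` give a well-defined
module structure over `U = ℂ⟨X,Y,Z⟩/(XZ+ZX−2X, YZ+ZY+2Y, X²−Y²−Z)` on the
`(2n+1)`-dimensional space, and the resulting `U`-module `E_n` is simple. -/
theorem En_well_defined_and_simple (n : ℕ) :
    (Matrix.toLin' (EmatX n) * Matrix.toLin' (EmatZ n) +
        Matrix.toLin' (EmatZ n) * Matrix.toLin' (EmatX n) =
      (2 : ℂ) • Matrix.toLin' (EmatX n)) ∧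
    (Matrix.toLin' (EmatY n) * Matrix.toLin' (EmatZ n) +
        Matrix.toLin' (EmatZ n) * Matrix.toLin' (EmatY n) =
      (-2 : ℂ) • Matrix.toLin' (EmatY n)) ∧
    (Matrix.toLin' (EmatX n) * Matrix.toLin' (EmatX n) -
        Matrix.toLin' (EmatY n) * Matrix.toLin' (EmatY n) =
      Matrix.toLin' (EmatZ n)) ∧
    ∀ W : Submodule ℂ (Fin (2 * n + 1) → ℂ),
      (∀ w ∈ W, Matrix.toLin' (EmatX n) w ∈ W) →
      (∀ w ∈ W, Matrix.toLin' (EmatY n) w ∈ W) →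
      (∀ w ∈ W, Matrix.toLin' (EmatZ n) w ∈ W) →
      W = ⊥ ∨ W = ⊤ := by
  have h := isTwistedLadder_ladderVec n
  have hspan := span_range_ladderVec n
  have hweight : ∀ m : ℕ, (2 * n : ℂ) = m → 2 * n = m := fun m hm => by exact_mod_cast hm
  refine ⟨h.X_mul_Z_add_Z_mul_X hspan, h.Y_mul_Z_add_Z_mul_Y hspan, h.X_mul_X_sub_Y_mul_Y hspan,
    fun W hX hY hZ => h.eq_bot_or_eq_top hspan (fun m hm => ?_) (fun m hm => ?_) hX hY hZ⟩
  · exact hweight m hm ▸ even_two_mul n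
  · exact ladderVec_eq_zero (hweight m hm ▸ Nat.lt_succ_self _)
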